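/- Let T be a consistent c.e. extension of PA and A(p1,...,pn,q1,...,qm) a propositional formula such that A(p⃗, ⊤^{f(1)},...,⊤^{f(m)}) is contingent for all f : {1,...,m} → {0,1}. Then for any arithmetic sentences ψ1,...,ψm there exist arithmetic sentences φ1,...,φn such that A(φ1,...,φn,ψ1,...,ψm) is independent of T (neither provable nor refutable in T). -/

import Mathlib

/-- An abstract setting for the arithmetic of provability: a type of sentences
of the language of arithmetic with falsity and implication, a provability
predicate `pr` (the sentence `Pr_T(⌜·⌝)`), provability in PA and in the fixed
consistent c.e. extension `T` of PA, the class of Σ₁ sentences, and truth in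
the standard model ℕ. -/
structure PASetup where
  Sent : Type
  fal : Sent
  imp : Sent → Sent → Sent
  pr : Sent → Sent
  PAPrv : Sent → Prop
  TPrv : Sent → Prop
  Sigma1 : Sent → Prop
  TrueN : Sent → Prop

namespace PASetup

def neg (S : PASetup) (A : S.Sent) : S.Sent := S.imp A S.fal
def conj (S : PASetup) (A B : S.Sent) : S.Sent := S.neg (S.imp A (S.neg B))
def disj (S : PASetup) (A B : S.Sent) : S.Sent := S.imp (S.neg A) B
def biimp (S : PASetup) (A B : S.Sent) : S.Sent := S.conj (S.imp A B) (S.imp B A)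
/-- `Con_T := ¬Pr_T(⌜0=1⌝)`. -/
def con (S : PASetup) : S.Sent := S.neg (S.pr S.fal)
/-- Provability in `PA + Con_T` (via the deduction theorem). -/
def PAConPrv (S : PASetup) (A : S.Sent) : Prop := S.PAPrv (S.imp S.con A)

/-- Iterated consistency statements: `Con_T^0 := (0=0)`,
`Con_T^{n+1} := ¬Pr_T(⌜¬Con_T^n⌝)`. -/
def conIter (S : PASetup) : ℕ → S.Sent
  | 0 => S.neg S.fal
  | n+1 => S.neg (S.pr (S.neg (conIter S n)))

/-- `A` is an instance of a propositional tautology. -/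
def TautInst (S : PASetup) (A : S.Sent) : Prop :=
  ∀ v : S.Sent → Bool, (∀ B C, v (S.imp B C) = (!(v B) || v C)) →
    v S.fal = false → v A = true

/-- The standard facts assumed about `PA`, `T`, and the natural Σ₁ provability
predicate `Pr_T` (closure under propositional logic, consistency of `T`, the
Hilbert–Bernays–Löb derivability conditions, provable Σ₁-completeness, Löb's
theorem, soundness of PA, and the semantics of truth in ℕ). -/
structure Facts (S : PASetup) : Prop where
  pa_taut : ∀ A, S.TautInst A → S.PAPrv A
  pa_mp : ∀ A B, S.PAPrv (S.imp A B) → S.PAPrv A → S.PAPrv B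
  pa_t : ∀ A, S.PAPrv A → S.TPrv A
  t_taut : ∀ A, S.TautInst A → S.TPrv A
  t_mp : ∀ A B, S.TPrv (S.imp A B) → S.TPrv A → S.TPrv B
  t_con : ¬ S.TPrv S.fal
  d1 : ∀ A, S.TPrv A → S.PAPrv (S.pr A)
  d2 : ∀ A B, S.PAPrv (S.imp (S.pr (S.imp A B)) (S.imp (S.pr A) (S.pr B)))
  d3 : ∀ A, S.Sigma1 A → S.PAPrv (S.imp A (S.pr A))
  sigma1_pr : ∀ A, S.Sigma1 (S.pr A)
  sigma1_fal : S.Sigma1 S.fal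
  sigma1_top : S.Sigma1 (S.neg S.fal)
  prv_of_incon : ∀ A, S.PAPrv (S.imp (S.neg S.con) (S.pr A))
  lob : ∀ A, S.TPrv (S.imp (S.pr A) A) → S.TPrv A
  pa_sound : ∀ A, S.PAPrv A → S.TrueN A
  true_imp : ∀ A B, S.TrueN (S.imp A B) ↔ (S.TrueN A → S.TrueN B)
  true_fal : ¬ S.TrueN S.fal
  true_pr : ∀ A, S.TrueN (S.pr A) ↔ S.TPrv A

end PASetup

/-- Classical propositional formulas over variable type `α`. -/
inductive PropForm (α : Type) : Type
  | var : α → PropForm α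
  | fal : PropForm α
  | imp : PropForm α → PropForm α → PropForm α

namespace PropForm

variable {α β : Type}

def neg (A : PropForm α) : PropForm α := imp A fal
def top : PropForm α := neg fal
def conj (A B : PropForm α) : PropForm α := neg (imp A (neg B))
def disj (A B : PropForm α) : PropForm α := imp (neg A) B
def biimp (A B : PropForm α) : PropForm α := conj (imp A B) (imp B A)
/-- `⊤^1 = ⊤`, `⊤^0 = ⊥`. -/
def const (b : Bool) : PropForm α := if b then top else fal

def eval (v : α → Bool) : PropForm α → Bool
  | var a => v a
  | fal => false
  | imp A B => !(eval v A) || eval v B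

/-- Simultaneous substitution. -/
def subst (s : α → PropForm β) : PropForm α → PropForm β
  | var a => s a
  | fal => fal
  | imp A B => imp (subst s A) (subst s B)

def Taut (A : PropForm α) : Prop := ∀ v, eval v A = true
def Unsat (A : PropForm α) : Prop := ∀ v, eval v A = false
def Contingent (A : PropForm α) : Prop := ¬ Taut A ∧ ¬ Unsat A

end PropForm

/-- Substitution of arithmetic sentences for the variables of a propositional
formula. -/
def PASetup.interp (S : PASetup) {α : Type} (g : α → S.Sent) : PropForm α → S.Sent
  | PropForm.var a => g a
  | PropForm.fal => S.fal
  | PropForm.imp A B => S.imp (S.interp g A) (S.interp g B)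

/-!
A single sentence `γ` independent of `T` suffices. For a Σ₁ sentence `σ` independent of
`PA + Con_T`, any `φ` with `PA + Con_T ⊢ σ ↔ Pr_T(⌜φ⌝)` is such a `γ`: if `T ⊢ φ` then
`PA ⊢ Pr_T(⌜φ⌝)`, and if `T ⊢ ¬φ` then `PA + Con_T ⊢ ¬Pr_T(⌜φ⌝)`.

Contingency says that, for every truth assignment to `q⃗`, the values of `p⃗` can be chosen so
as to give `A` any prescribed truth value. By functional completeness a choice is given by
formulas `B⃗(r, q⃗)`, where `r` is the prescribed value, so that `A(B⃗(r, q⃗), q⃗) ↔ r` is a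
tautology. Putting `γ` for `r` and `ψ⃗` for `q⃗` makes `A(φ⃗, ψ⃗)` equivalent to `γ`.
-/

namespace PropForm

section Eval

variable {α β : Type}

theorem eval_subst (s : α → PropForm β) (w : β → Bool) (A : PropForm α) :
    (A.subst s).eval w = A.eval fun a => (s a).eval w := by
  induction A with
  | var a => rfl
  | fal => rfl
  | imp A B ihA ihB => simp only [subst, eval, ihA, ihB]

theorem eval_const (b : Bool) (w : α → Bool) : (const b).eval w = b := by
  cases b <;> rfl

theorem eval_biimp (A B : PropForm α) (w : α → Bool) :
    (A.biimp B).eval w = (A.eval w == B.eval w) := by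
  simp only [biimp, conj, neg, eval]
  cases A.eval w <;> cases B.eval w <;> rfl

/-- The conditional `if C then A else B`, i.e. `(C → A) ∧ (¬C → B)`; it is the Shannon expansion
step in the proof of functional completeness. -/
def ifThenElse (C A B : PropForm α) : PropForm α := conj (imp C A) (imp (neg C) B)

theorem eval_ifThenElse (C A B : PropForm α) (w : α → Bool) :
    (ifThenElse C A B).eval w = if C.eval w then A.eval w else B.eval w := by
  simp only [ifThenElse, conj, neg, eval]
  cases C.eval w <;> cases A.eval w <;> cases B.eval w <;> rfl

theorem exists_finset_dependsOn_eval (A : PropForm α) :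
    ∃ V : Finset α, DependsOn (fun w => A.eval w) V := by
  classical
  induction A with
  | var a => exact ⟨{a}, fun _ _ h => h a (Finset.mem_singleton_self a)⟩
  | fal => exact ⟨∅, fun _ _ _ => rfl⟩
  | imp A B ihA ihB =>
    obtain ⟨V, hV⟩ := ihA
    obtain ⟨W, hW⟩ := ihB
    refine ⟨V ∪ W, fun w w' h => ?_⟩
    have hA : A.eval w = A.eval w' := hV fun a ha => h a (Finset.mem_union_left W ha)
    have hB : B.eval w = B.eval w' := hW fun a ha => h a (Finset.mem_union_right V ha)
    simp only [eval, hA, hB]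

theorem exists_eval_eq_of_dependsOn {V : Finset α} {F : (α → Bool) → Bool} (hF : DependsOn F V) :
    ∃ B : PropForm α, ∀ w, B.eval w = F w := by
  classical
  induction V using Finset.induction_on generalizing F with
  | empty =>
    rw [Finset.coe_empty] at hF
    exact ⟨const (F fun _ => false), fun w => (eval_const _ w).trans (hF.empty _ w)⟩
  | insert a V _ ih =>
    have hupdate (b : Bool) : DependsOn (fun w => F (Function.update w a b)) V := by
      refine fun w w' h => hF fun i hi => ?_
      by_cases hia : i = a
      · subst hia
        simp only [Function.update_self]
      · simp only [Function.update_of_ne hia]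
        exact h i (Finset.mem_of_mem_insert_of_ne hi hia)
    choose B hB using fun b => ih (hupdate b)
    refine ⟨ifThenElse (var a) (B true) (B false), fun w => ?_⟩
    calc (ifThenElse (var a) (B true) (B false)).eval w = (B (w a)).eval w := by
          rw [eval_ifThenElse, eval]
          cases w a <;> rfl
      _ = F w := by rw [hB, Function.update_eq_self]

theorem Contingent.exists_eval_eq {A : PropForm α} (hA : A.Contingent) (c : Bool) :
    ∃ w, A.eval w = c := by
  cases c with
  | false => simpa only [Taut, not_forall, Bool.not_eq_true] using hA.1
  | true => simpa only [Unsat, not_forall, Bool.not_eq_false] using hA.2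

end Eval

section Parameters

variable {α β : Type} {A : PropForm (α ⊕ β)}

theorem eval_subst_const (w : α → Bool) (f : β → Bool) :
    (A.subst (Sum.elim var (const ∘ f))).eval w = A.eval (Sum.elim w f) := by
  rw [eval_subst]
  congr 1
  ext (i | j)
  · rfl
  · exact eval_const (f j) w

theorem exists_finset_dependsOn_solution
    (hA : ∀ (f : β → Bool) (c : Bool), ∃ w : α → Bool, A.eval (Sum.elim w f) = c) :
    ∃ (V : Finset β) (w : (β → Bool) → Bool → α → Bool),
      (∀ f c, A.eval (Sum.elim (w f c) f) = c) ∧ ∀ c, DependsOn (w · c) V := by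
  classical
  obtain ⟨V, hV⟩ := A.exists_finset_dependsOn_eval
  choose w hw using hA
  -- Resetting the parameters that do not occur in `A` makes the choice of `w` finitary.
  let truncate (f : β → Bool) (j : β) : Bool := if j ∈ V.toRight then f j else false
  refine ⟨V.toRight, fun f => w (truncate f), fun f c => ?_, fun c f g hfg => ?_⟩
  · refine (hV ?_).trans (hw (truncate f) c)
    rintro (i | j) hx
    · rfl
    · simp only [Sum.elim_inr, truncate, Finset.mem_toRight.2 hx, if_true]
  · have htruncate : truncate f = truncate g := by
      ext j
      by_cases hj : j ∈ V.toRight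
      · simp only [truncate, hj, if_true, hfg j hj]
      · simp only [truncate, hj, if_false]
    simp only [htruncate]

/-- The variable `none` stands for the truth value that `A` is made to take. -/
theorem exists_taut_var_biimp_subst
    (hA : ∀ f : β → Bool, (A.subst (Sum.elim var (const ∘ f))).Contingent) :
    ∃ s : α → PropForm (Option β),
      ((var none).biimp (A.subst (Sum.elim s (var ∘ some)))).Taut := by
  obtain ⟨V, w, hw, hdep⟩ := exists_finset_dependsOn_solution fun f c =>
    ((hA f).exists_eval_eq c).imp fun w hw => (eval_subst_const w f).symm.trans hw
  have hrepr (i : α) : ∃ B : PropForm (Option β), ∀ u, B.eval u = w (u ∘ some) (u none) i := by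
    refine exists_eval_eq_of_dependsOn (V := V.insertNone) fun u u' h => ?_
    rw [h none Finset.none_mem_insertNone]
    exact congrFun (hdep _ fun j hj => h (some j) (Finset.some_mem_insertNone.2 hj)) i
  choose s hs using hrepr
  refine ⟨s, fun u => ?_⟩
  rw [eval_biimp, beq_iff_eq, eq_comm]
  calc (A.subst (Sum.elim s (var ∘ some))).eval u
      = A.eval (Sum.elim (w (u ∘ some) (u none)) (u ∘ some)) := by
        rw [eval_subst]
        congr 1
        ext (i | j)
        · exact hs i u
        · rfl
    _ = u none := hw _ _

end Parameters

end PropForm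

namespace PASetup

variable {S : PASetup}

section Interp

variable {α β : Type}

theorem interp_subst (g : β → S.Sent) (s : α → PropForm β) (A : PropForm α) :
    S.interp g (A.subst s) = S.interp (S.interp g ∘ s) A := by
  induction A with
  | var a => rfl
  | fal => rfl
  | imp A B ihA ihB => simp only [PropForm.subst, interp, ihA, ihB]

theorem tautInst_interp {A : PropForm α} (hA : A.Taut) (g : α → S.Sent) :
    S.TautInst (S.interp g A) := by
  intro v himp hfal
  have heval (B : PropForm α) : v (S.interp g B) = B.eval (v ∘ g) := by
    induction B with
    | var a => rfl
    | fal => exact hfal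
    | imp B C ihB ihC => simp only [interp, PropForm.eval, himp, ihB, ihC]
  rw [heval, hA]

end Interp

theorem tautInst_biimp_mp (A B : S.Sent) : S.TautInst (S.imp (S.biimp A B) (S.imp A B)) := by
  intro v himp hfal
  simp only [biimp, conj, neg, himp, hfal]
  cases v A <;> cases v B <;> rfl

theorem tautInst_biimp_mpr (A B : S.Sent) : S.TautInst (S.imp (S.biimp A B) (S.imp B A)) := by
  intro v himp hfal
  simp only [biimp, conj, neg, himp, hfal]
  cases v A <;> cases v B <;> rfl

theorem tautInst_contrapose (A B : S.Sent) :
    S.TautInst (S.imp (S.imp A B) (S.imp (S.neg B) (S.neg A))) := by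
  intro v himp hfal
  simp only [neg, himp, hfal]
  cases v A <;> cases v B <;> rfl

theorem tautInst_imp_imp_left (A C : S.Sent) : S.TautInst (S.imp A (S.imp C A)) := by
  intro v himp _
  simp only [himp]
  cases v A <;> cases v C <;> rfl

theorem tautInst_imp_distrib (C A B : S.Sent) :
    S.TautInst (S.imp (S.imp C (S.imp A B)) (S.imp (S.imp C A) (S.imp C B))) := by
  intro v himp _
  simp only [himp]
  cases v A <;> cases v B <;> cases v C <;> rfl

/-- A set of sentences, given as a provability predicate `Prv`, closed under classical
propositional logic, to treat PA, `PA + Con_T` and `T` uniformly. -/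
structure DeductivelyClosed (S : PASetup) (Prv : S.Sent → Prop) : Prop where
  taut {A : S.Sent} : S.TautInst A → Prv A
  mp {A B : S.Sent} : Prv (S.imp A B) → Prv A → Prv B

/-- Independence of `A` from a theory, given as its provability predicate `Prv`: the theory neither
proves nor refutes `A`. -/
def Independent (S : PASetup) (Prv : S.Sent → Prop) (A : S.Sent) : Prop :=
  ¬ Prv A ∧ ¬ Prv (S.neg A)

namespace DeductivelyClosed

variable {Prv : S.Sent → Prop} {A B : S.Sent}

theorem biimp_mp (hP : S.DeductivelyClosed Prv) (h : Prv (S.biimp A B)) : Prv (S.imp A B) :=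
  hP.mp (hP.taut (tautInst_biimp_mp A B)) h

theorem biimp_mpr (hP : S.DeductivelyClosed Prv) (h : Prv (S.biimp A B)) : Prv (S.imp B A) :=
  hP.mp (hP.taut (tautInst_biimp_mpr A B)) h

theorem contrapose (hP : S.DeductivelyClosed Prv) (h : Prv (S.imp A B)) :
    Prv (S.imp (S.neg B) (S.neg A)) :=
  hP.mp (hP.taut (tautInst_contrapose A B)) h

theorem imp_intro (hP : S.DeductivelyClosed Prv) (C : S.Sent) (hA : Prv A) : Prv (S.imp C A) :=
  hP.mp (hP.taut (tautInst_imp_imp_left A C)) hA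

theorem adjoin (hP : S.DeductivelyClosed Prv) (C : S.Sent) :
    S.DeductivelyClosed fun A => Prv (S.imp C A) where
  taut hA := hP.imp_intro C (hP.taut hA)
  mp hAB hA := hP.mp (hP.mp (hP.taut (tautInst_imp_distrib C _ _)) hAB) hA

end DeductivelyClosed

theorem Independent.of_biimp {Prv : S.Sent → Prop} {A B : S.Sent} (hA : S.Independent Prv A)
    (hP : S.DeductivelyClosed Prv) (hAB : Prv (S.biimp A B)) : S.Independent Prv B :=
  ⟨fun hB => hA.1 (hP.mp (hP.biimp_mpr hAB) hB),
    fun hB => hA.2 (hP.mp (hP.contrapose (hP.biimp_mp hAB)) hB)⟩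

namespace Facts

theorem deductivelyClosed_pa (hS : S.Facts) : S.DeductivelyClosed S.PAPrv :=
  ⟨hS.pa_taut _, hS.pa_mp _ _⟩

theorem deductivelyClosed_t (hS : S.Facts) : S.DeductivelyClosed S.TPrv :=
  ⟨hS.t_taut _, hS.t_mp _ _⟩

theorem deductivelyClosed_paCon (hS : S.Facts) : S.DeductivelyClosed S.PAConPrv :=
  hS.deductivelyClosed_pa.adjoin S.con

theorem paConPrv_pr (hS : S.Facts) {φ : S.Sent} (hφ : S.TPrv φ) : S.PAConPrv (S.pr φ) :=
  hS.deductivelyClosed_pa.imp_intro S.con (hS.d1 φ hφ)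

theorem paConPrv_neg_pr (hS : S.Facts) {φ : S.Sent} (hφ : S.TPrv (S.neg φ)) :
    S.PAConPrv (S.neg (S.pr φ)) :=
  hS.deductivelyClosed_pa.contrapose (hS.pa_mp _ _ (hS.d2 φ S.fal) (hS.d1 _ hφ))

theorem independent_of_paConPrv_biimp_pr (hS : S.Facts) {σ φ : S.Sent}
    (hσφ : S.PAConPrv (S.biimp σ (S.pr φ))) (hσ : S.Independent S.PAConPrv σ) :
    S.Independent S.TPrv φ :=
  have hPr : S.Independent S.PAConPrv (S.pr φ) := hσ.of_biimp hS.deductivelyClosed_paCon hσφ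
  ⟨fun hφ => hPr.1 (hS.paConPrv_pr hφ), fun hφ => hPr.2 (hS.paConPrv_neg_pr hφ)⟩

end Facts

end PASetup

theorem incompleteness_prop_form_general {S : PASetup} {Prv : S.Sent → Prop}
    (hP : S.DeductivelyClosed Prv) {γ : S.Sent} (hγ : S.Independent Prv γ)
    {α β : Type} {A : PropForm (α ⊕ β)}
    (hA : ∀ f : β → Bool,
      (A.subst (Sum.elim PropForm.var (PropForm.const ∘ f))).Contingent)
    (ψ : β → S.Sent) :
    ∃ φ : α → S.Sent, S.Independent Prv (S.interp (Sum.elim φ ψ) A) := by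
  obtain ⟨s, hs⟩ := PropForm.exists_taut_var_biimp_subst hA
  let g : Option β → S.Sent := fun o => o.elim γ ψ
  have hequiv : Prv (S.biimp γ (S.interp g (A.subst (Sum.elim s (PropForm.var ∘ some))))) :=
    hP.taut (PASetup.tautInst_interp hs g)
  rw [PASetup.interp_subst, Sum.comp_elim] at hequiv
  exact ⟨S.interp g ∘ s, hγ.of_biimp hP hequiv⟩

/-- assuming a Σ₁ sentence independent of `PA + Con_T` and the
FGH theorem: if `A(p⃗,⊤^{f(1)},…,⊤^{f(m)})` is contingent for all `f`, then
for all sentences `ψ₁,…,ψₘ` there are sentences `φ₁,…,φₙ` such that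
`A(φ₁,…,φₙ,ψ₁,…,ψₘ)` is independent of `T`. -/
theorem incompleteness_prop_form (S : PASetup) (hS : S.Facts)
    (fgh : ∀ σ, S.Sigma1 σ → ∃ φ, S.PAConPrv (S.biimp σ (S.pr φ)))
    (indep : ∃ σ, S.Sigma1 σ ∧ ¬ S.PAConPrv σ ∧ ¬ S.PAConPrv (S.neg σ))
    (n m : ℕ) (A : PropForm (Fin n ⊕ Fin m))
    (hA : ∀ f : Fin m → Bool,
      PropForm.Contingent (A.subst fun x =>
        match x with
        | Sum.inl i => PropForm.var i
        | Sum.inr j => PropForm.const (f j))) :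
    ∀ ψ : Fin m → S.Sent, ∃ φ : Fin n → S.Sent,
      ¬ S.TPrv (S.interp (Sum.elim φ ψ) A) ∧
      ¬ S.TPrv (S.neg (S.interp (Sum.elim φ ψ) A)) := by
  obtain ⟨σ, hσ, hindep⟩ := indep
  obtain ⟨γ, hγ⟩ := fgh σ hσ
  have hA' (f : Fin m → Bool) :
      (A.subst (Sum.elim PropForm.var (PropForm.const ∘ f))).Contingent := by
    convert hA f using 3 with x
    cases x <;> rfl
  exact incompleteness_prop_form_general hS.deductivelyClosed_t
    (hS.independent_of_paConPrv_biimp_pr hγ hindep) hA'
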